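/- Suppose F satisfies (G1) and (G2) and the Perron–Frobenius operator P_σ of the base shift has spectral gap on d_θ-Lipschitz functions, and let μ₀ be the unique F-invariant probability measure in S^∞. Then every function f : Σ_A^+ × K → ℝ that is Lipschitz with respect to the metric d_θ + d satisfies fμ₀ ∈ S^∞; that is, the space of Lipschitz functions on Σ_A^+ × K is contained in Θ_{μ₀} = {f : fμ₀ ∈ S^∞}. -/

import Mathlib

open MeasureTheory ENNReal Set

namespace RDS

/-- The one-sided subshift of finite type `Σ_A^+` determined by the 0-1 matrix `A`. -/
abbrev SigmaA (N : ℕ) (A : Fin N → Fin N → Bool) :=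
  {x : ℕ → Fin N // ∀ i, A (x i) (x (i + 1)) = true}

variable {N : ℕ} {A : Fin N → Fin N → Bool}

/-- The shift map `σ` on `Σ_A^+`. -/
def shift (x : SigmaA N A) : SigmaA N A :=
  ⟨fun i => x.val (i + 1), fun i => x.prop (i + 1)⟩

/-- Aperiodicity of a 0-1 matrix: some power has all entries positive. -/
def Aperiodic (A : Fin N → Fin N → Bool) : Prop :=
  ∃ k : ℕ, 0 < k ∧ ∀ i j,
    0 < ((Matrix.of fun a b => if A a b then (1 : ℕ) else 0) ^ k) i j

/-- The metric `d_θ(x,y) = Σ_i θ^i (1 - δ(x_i, y_i))` on `Σ_A^+`. -/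
noncomputable def dTheta (θ : ℝ) (x y : SigmaA N A) : ℝ :=
  ∑' i : ℕ, θ ^ i * (if x.val i = y.val i then (0 : ℝ) else 1)

/-- Cylinder sets of `Σ_A^+`. -/
def cylinder (n : ℕ) (w : Fin (n + 1) → Fin N) : Set (SigmaA N A) :=
  {x | ∀ i : Fin (n + 1), x.val i = w i}

/-- `m` is a Markov measure on `Σ_A^+` compatible with `A`: it is given on
cylinders by a stochastic matrix `P` (vanishing where `A` vanishes) and a
stationary probability vector `p`. -/
def IsMarkov (m : Measure (SigmaA N A)) : Prop :=
  ∃ (p : Fin N → ℝ≥0∞) (P : Fin N → Fin N → ℝ≥0∞),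
    (∑ i, p i = 1) ∧ (∀ i, ∑ j, P i j = 1) ∧ (∀ j, ∑ i, p i * P i j = p j) ∧
    (∀ i j, A i j = false → P i j = 0) ∧
    ∀ (n : ℕ) (w : Fin (n + 1) → Fin N),
      m (cylinder n w) = p (w 0) * ∏ i : Fin n, P (w i.castSucc) (w i.succ)

/-- `σ_i⁻¹(γ)`: the sequence `γ` with the symbol `i` prepended
(defined when `A i γ₀ = 1`), i.e. the inverse branch of the restriction `σ_i`
of `σ` to the cylinder `[i]`. -/
def prepend (i : Fin N) (x : SigmaA N A) (h : A i (x.val 0) = true) : SigmaA N A :=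
  ⟨fun n => match n with
    | 0 => i
    | Nat.succ k => x.val k,
   fun j => match j with
    | 0 => h
    | Nat.succ k => x.prop k⟩

/-- `f` is `L`-Lipschitz with respect to the distance function `d`. -/
def LipWithD {X : Type*} (d : X → X → ℝ) (L : ℝ) (f : X → ℝ) : Prop :=
  ∀ x y, |f x - f y| ≤ L * d x y

/-- `f` is Lipschitz with respect to the distance function `d`. -/
def LipD {X : Type*} (d : X → X → ℝ) (f : X → ℝ) : Prop :=
  ∃ L : ℝ, LipWithD d L f

/-- The best Lipschitz constant of `f` with respect to `d` (valued in `ℝ≥0∞`). -/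
noncomputable def lipConst {X : Type*} (d : X → X → ℝ) (f : X → ℝ) : ℝ≥0∞ :=
  ⨆ (x : X) (y : X), ENNReal.ofReal (|f x - f y| / d x y)

/-- The sup norm of `f` (valued in `ℝ≥0∞`). -/
noncomputable def supNormE {X : Type*} (f : X → ℝ) : ℝ≥0∞ :=
  ⨆ x : X, ENNReal.ofReal |f x|

/-- The norm `‖f‖_θ = ‖f‖_∞ + Lip_d(f)`. -/
noncomputable def thetaNorm {X : Type*} (d : X → X → ℝ) (f : X → ℝ) : ℝ≥0∞ :=
  supNormE f + lipConst d f

/-- The Perron-Frobenius operator duality characterizing `P_σ`: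
`∫ P_σ(φ) · ψ dm = ∫ φ · (ψ ∘ σ) dm` for integrable `φ` and bounded measurable `ψ`. -/
def IsPerronFrobenius (m : Measure (SigmaA N A))
    (Pσ : (SigmaA N A → ℝ) → SigmaA N A → ℝ) : Prop :=
  ∀ φ ψ : SigmaA N A → ℝ, Integrable φ m → Measurable ψ → (∃ C, ∀ x, |ψ x| ≤ C) →
    ∫ x, Pσ φ x * ψ x ∂m = ∫ x, φ x * ψ (shift x) ∂m

/-- Spectral gap for `P_σ` on `d_θ`-Lipschitz functions with constants `D`, `r`:
`‖P_σ^n φ‖_θ ≤ D r^n ‖φ‖_θ` for all `n` and all `d_θ`-Lipschitz `φ` with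
`∫ φ dm = 0`. -/
def HasGap (m : Measure (SigmaA N A)) (θ : ℝ)
    (Pσ : (SigmaA N A → ℝ) → SigmaA N A → ℝ) (D r : ℝ) : Prop :=
  ∀ φ : SigmaA N A → ℝ, LipD (dTheta θ) φ → (∫ x, φ x ∂m) = 0 →
    ∀ n : ℕ, thetaNorm (dTheta θ) (Pσ^[n] φ) ≤
      ENNReal.ofReal (D * r ^ n) * thetaNorm (dTheta θ) φ

/-- `Jm i` is the Jacobian `J_{m,σ_i}` of `m` with respect to the branch `σ_i`
(the restriction of `σ` to the cylinder `[i]`): `m (σ_i(E)) = ∫_E J_{m,σ_i} dm`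
for every measurable `E` (intersected with `[i]`). -/
def IsJacobian (m : Measure (SigmaA N A)) (Jm : Fin N → SigmaA N A → ℝ) : Prop :=
  ∀ (i : Fin N) (E : Set (SigmaA N A)), MeasurableSet E →
    m {γ : SigmaA N A | ∃ h : A i (γ.val 0) = true, prepend i γ h ∈ E} =
      ∫⁻ x in E ∩ {x : SigmaA N A | x.val 0 = i}, ENNReal.ofReal (Jm i x) ∂m

variable {K : Type*} [MetricSpace K] [MeasurableSpace K]

/-- The Wasserstein-Kantorovich like distance `W(ν₁,ν₂)`: the supremum of
`|∫ g dν₁ - ∫ g dν₂|` over `g : K → ℝ` with `Lip(g) ≤ 1` and `‖g‖_∞ ≤ 1`.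
Applied with `ν₂ = 0` it gives the norm `‖ν₁‖_W`; applied to the two parts of a
decomposition of a signed measure it gives its `‖·‖_W` norm. -/
noncomputable def wDist (ν₁ ν₂ : Measure K) : ℝ≥0∞ :=
  ⨆ g : {g : K → ℝ // LipschitzWith 1 g ∧ ∀ z, |g z| ≤ 1},
    ENNReal.ofReal |∫ z, g.val z ∂ν₁ - ∫ z, g.val z ∂ν₂|

/-- The skew product `F(x,z) = (σ(x), G(x,z))`. -/
def skew (G : SigmaA N A × K → K) (p : SigmaA N A × K) : SigmaA N A × K :=
  (shift p.1, G p)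

/-- The transfer operator `F^* μ (E) = μ (F⁻¹ E)` acting on signed measures. -/
noncomputable def transfer (G : SigmaA N A × K → K)
    (μ : SignedMeasure (SigmaA N A × K)) : SignedMeasure (SigmaA N A × K) :=
  μ.map (skew G)

/-- Condition (G1): uniform contraction of the vertical fibers with rate `α`. -/
def CondG1 (G : SigmaA N A × K → K) (α : ℝ) : Prop :=
  ∀ (x : SigmaA N A) (z₁ z₂ : K), dist (G (x, z₁)) (G (x, z₂)) ≤ α * dist z₁ z₂

/-- Condition (G2): `x ↦ G(x,z)` is `d_θ`-Lipschitz with constant `H`,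
uniformly in `z`. -/
def CondG2 (θ : ℝ) (G : SigmaA N A × K → K) (H : ℝ) : Prop :=
  ∀ (z : K) (x y : SigmaA N A), dist (G (x, z)) (G (y, z)) ≤ H * dTheta θ x y

/-- `T` is (the path `γ ↦ μ|_γ` of) a disintegration of `μ` along the vertical
fibers, over the reference measure `m`: `μ(E) = ∫ (μ|_γ)(E ∩ γ) dm(γ)`. -/
def IsDisint (m : Measure (SigmaA N A)) (μ : Measure (SigmaA N A × K))
    (T : SigmaA N A → Measure K) : Prop :=
  (∀ E : Set (SigmaA N A × K), MeasurableSet E →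
      μ E = ∫⁻ γ, T γ {z | (γ, z) ∈ E} ∂m) ∧
  ∀ E : Set K, MeasurableSet E → Measurable fun γ => T γ E

/-- The (essential) `‖·‖_W`-Lipschitz constant of a path of measures,
`|Γ|_θ^ω = ess sup_{γ₁ ≠ γ₂} ‖Γ(γ₁) - Γ(γ₂)‖_W / d_θ(γ₁,γ₂)`. -/
noncomputable def pathLip (m : Measure (SigmaA N A)) (θ : ℝ)
    (T : SigmaA N A → Measure K) : ℝ≥0∞ :=
  essSup (fun p : SigmaA N A × SigmaA N A =>
    wDist (T p.1) (T p.2) / ENNReal.ofReal (dTheta θ p.1 p.2)) (m.prod m)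

/-- The Lipschitz constant `|μ|_θ` of a positive measure: the infimum over
disintegrations `ω` of `μ` of `|μ|_θ^ω`. -/
noncomputable def lipDisint (m : Measure (SigmaA N A)) (θ : ℝ)
    (μ : Measure (SigmaA N A × K)) : ℝ≥0∞ :=
  ⨅ T : {T : SigmaA N A → Measure K // IsDisint m μ T}, pathLip m θ T.val

/-- The fiberwise transfer formula: the path representing `F^*μ` induced by the
path `T` representing `μ`, i.e.
`γ ↦ Σ_i 1_{σ([i])}(γ) (F_{iγ})_*(T(iγ)) / J_{m,σ_i}(iγ)`. -/
noncomputable def transferPath (G : SigmaA N A × K → K) (Jm : Fin N → SigmaA N A → ℝ)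
    (T : SigmaA N A → Measure K) : SigmaA N A → Measure K :=
  fun γ => ∑ i : Fin N, if h : A i (γ.val 0) = true then
      ENNReal.ofReal ((Jm i (prepend i γ h))⁻¹) •
        ((T (prepend i γ h)).map fun z => G (prepend i γ h, z))
    else 0

variable [BorelSpace K] [CompactSpace K] [Nonempty K]

/-- The fiberwise restriction `μ|_γ = π₂_* (φ₁(γ) μ_γ)` of a finite positive
measure `μ` on `Σ_A^+ × K`, where `({μ_γ}_γ, φ₁ m)` is the Rokhlin
disintegration of `μ` along the vertical fibers and `φ₁ = d(π₁_*μ)/dm`. -/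
noncomputable def fiberR (m : Measure (SigmaA N A))
    (μ : Measure (SigmaA N A × K)) (γ : SigmaA N A) : Measure K := by
  by_cases h : IsFiniteMeasure μ
  · haveI := h
    exact (μ.fst.rnDeriv m γ) • μ.condKernel γ
  · exact 0

/-- The norm `‖μ‖_∞ = ess sup_γ ‖μ|_γ‖_W` of a signed measure written as a
difference `μ = μ₁ - μ₂` of positive measures. -/
noncomputable def infNormPair (m : Measure (SigmaA N A))
    (μ₁ μ₂ : Measure (SigmaA N A × K)) : ℝ≥0∞ :=
  essSup (fun γ => wDist (fiberR m μ₁ γ) (fiberR m μ₂ γ)) m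

/-- The marginal density `φ₁ = d(π₁_*μ)/dm` of the signed measure `μ = μ₁ - μ₂`. -/
noncomputable def phiPair (m : Measure (SigmaA N A))
    (μ₁ μ₂ : Measure (SigmaA N A × K)) (γ : SigmaA N A) : ℝ :=
  (μ₁.fst.rnDeriv m γ).toReal - (μ₂.fst.rnDeriv m γ).toReal

/-- Membership in `AB`: both parts are finite with first marginal absolutely
continuous with respect to `m`. -/
def MemABPair (m : Measure (SigmaA N A)) (μ₁ μ₂ : Measure (SigmaA N A × K)) : Prop :=
  μ₁.fst ≪ m ∧ μ₂.fst ≪ m ∧ IsFiniteMeasure μ₁ ∧ IsFiniteMeasure μ₂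

/-- Membership in `S^∞`: `μ ∈ AB`, `‖μ‖_∞ < ∞` and the marginal density `φ₁`
has a `d_θ`-Lipschitz version. -/
def MemSPair (m : Measure (SigmaA N A)) (θ : ℝ)
    (μ₁ μ₂ : Measure (SigmaA N A × K)) : Prop :=
  MemABPair m μ₁ μ₂ ∧ infNormPair m μ₁ μ₂ < ⊤ ∧
    ∃ ψ : SigmaA N A → ℝ, ψ =ᵐ[m] phiPair m μ₁ μ₂ ∧ LipD (dTheta θ) ψ

/-- `‖φ₁‖_θ`, computed on the best version of the marginal density. -/
noncomputable def thetaNormMu (m : Measure (SigmaA N A)) (θ : ℝ)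
    (μ₁ μ₂ : Measure (SigmaA N A × K)) : ℝ≥0∞ :=
  ⨅ ψ : {ψ : SigmaA N A → ℝ // ψ =ᵐ[m] phiPair m μ₁ μ₂}, thetaNorm (dTheta θ) ψ.val

/-- The norm `‖μ‖_{S^∞} = ‖φ₁‖_θ + ‖μ‖_∞`. -/
noncomputable def sNormPair (m : Measure (SigmaA N A)) (θ : ℝ)
    (μ₁ μ₂ : Measure (SigmaA N A × K)) : ℝ≥0∞ :=
  thetaNormMu m θ μ₁ μ₂ + infNormPair m μ₁ μ₂

/-- Positive part of a signed measure. -/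
noncomputable def jPos {X : Type*} [MeasurableSpace X] (μ : SignedMeasure X) : Measure X :=
  μ.toJordanDecomposition.posPart

/-- Negative part of a signed measure. -/
noncomputable def jNeg {X : Type*} [MeasurableSpace X] (μ : SignedMeasure X) : Measure X :=
  μ.toJordanDecomposition.negPart

/-- Membership in `AB` for signed measures. -/
def MemAB (m : Measure (SigmaA N A)) (μ : SignedMeasure (SigmaA N A × K)) : Prop :=
  MemABPair m (jPos μ) (jNeg μ)

/-- Membership in `S^∞` for signed measures. -/
def MemS (m : Measure (SigmaA N A)) (θ : ℝ) (μ : SignedMeasure (SigmaA N A × K)) : Prop :=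
  MemSPair m θ (jPos μ) (jNeg μ)

/-- `‖μ‖_∞` for signed measures. -/
noncomputable def infNorm (m : Measure (SigmaA N A))
    (μ : SignedMeasure (SigmaA N A × K)) : ℝ≥0∞ :=
  infNormPair m (jPos μ) (jNeg μ)

/-- `‖μ‖_{S^∞}` for signed measures. -/
noncomputable def sNorm (m : Measure (SigmaA N A)) (θ : ℝ)
    (μ : SignedMeasure (SigmaA N A × K)) : ℝ≥0∞ :=
  sNormPair m θ (jPos μ) (jNeg μ)

/-- `‖φ₁‖_∞` of the marginal density of a signed measure. -/
noncomputable def phiSup (m : Measure (SigmaA N A))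
    (μ : SignedMeasure (SigmaA N A × K)) : ℝ≥0∞ :=
  essSup (fun γ => ENNReal.ofReal |phiPair m (jPos μ) (jNeg μ) γ|) m

/-!
Write `ν = π₁_* μ₀`. Invariance of `μ₀` and the contraction (G1) show that the density of
`π₁_* (f μ₀)` with respect to `ν` is the uniform limit, at rate `αⁿ`, of the functions
`Pⁿ (x ↦ f (Fⁿ (x, z₀)))`, where `P` is the transfer operator of the Markov measure `ν`. By (G1)
and (G2) each `x ↦ f (Fⁿ (x, z₀))` is Lipschitz along the inverse branches of `σⁿ`, with a constant
that does not depend on `n`; averaging over the branches makes the iterates uniformly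
`d_θ`-Lipschitz, and so is their limit. The spectral gap enters only to identify `ν` with the
reference measure `m`: if `ν` is invariant with Lipschitz density `ψ`, then
`ν E - m E = ∫_{σ⁻ⁿ E} (ψ - 1) dm`, which decays like `rⁿ`.
-/

section Development

open Filter Function
open scoped NNReal Topology

/-! ### The symbolic metric -/

section SymbolicMetric

variable {θ : ℝ} {x y : SigmaA N A}

lemma summable_dTheta (hθ0 : 0 ≤ θ) (hθ1 : θ < 1) (x y : SigmaA N A) :
    Summable fun i : ℕ => θ ^ i * (if x.val i = y.val i then (0 : ℝ) else 1) := by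
  refine (summable_geometric_of_lt_one hθ0 hθ1).of_nonneg_of_le (fun i => ?_) fun i => ?_ <;>
    have := pow_nonneg hθ0 i <;> split_ifs <;> simp [this]

lemma dTheta_nonneg (hθ0 : 0 ≤ θ) (x y : SigmaA N A) : 0 ≤ dTheta θ x y :=
  tsum_nonneg fun i => mul_nonneg (pow_nonneg hθ0 i) (by split_ifs <;> norm_num)

lemma dTheta_le (hθ0 : 0 ≤ θ) (hθ1 : θ < 1) (x y : SigmaA N A) : dTheta θ x y ≤ (1 - θ)⁻¹ := by
  rw [← tsum_geometric_of_lt_one hθ0 hθ1]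
  refine (summable_dTheta hθ0 hθ1 x y).tsum_le_tsum (fun i => ?_)
    (summable_geometric_of_lt_one hθ0 hθ1)
  exact mul_le_of_le_one_right (pow_nonneg hθ0 i) (by split_ifs <;> norm_num)

lemma dTheta_self (θ : ℝ) (x : SigmaA N A) : dTheta θ x x = 0 := by
  simp [dTheta]

lemma dTheta_comm (θ : ℝ) (x y : SigmaA N A) : dTheta θ x y = dTheta θ y x := by
  simp only [dTheta, eq_comm]

lemma dTheta_triangle (hθ0 : 0 ≤ θ) (hθ1 : θ < 1) (x y z : SigmaA N A) :
    dTheta θ x z ≤ dTheta θ x y + dTheta θ y z := by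
  have hxy := summable_dTheta hθ0 hθ1 x y
  have hyz := summable_dTheta hθ0 hθ1 y z
  unfold dTheta
  rw [← hxy.tsum_add hyz]
  refine (summable_dTheta hθ0 hθ1 x z).tsum_le_tsum (fun i => ?_) (hxy.add hyz)
  rw [← mul_add]
  refine mul_le_mul_of_nonneg_left ?_ (pow_nonneg hθ0 i)
  split_ifs <;> simp_all

lemma pow_le_dTheta (hθ0 : 0 ≤ θ) (hθ1 : θ < 1) {i : ℕ} (h : x.val i ≠ y.val i) :
    θ ^ i ≤ dTheta θ x y := by
  have hi := (summable_dTheta hθ0 hθ1 x y).le_tsum i fun j _ =>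
    mul_nonneg (pow_nonneg hθ0 j) (by split_ifs <;> norm_num)
  simpa [dTheta, h] using hi

lemma eq_of_dTheta_eq_zero (hθ0 : 0 < θ) (hθ1 : θ < 1) (h : dTheta θ x y = 0) : x = y := by
  refine Subtype.ext (funext fun i => ?_)
  by_contra hne
  exact ((pow_pos hθ0 i).trans_le (pow_le_dTheta hθ0.le hθ1 hne)).ne' h

lemma dTheta_eq_mul_dTheta_shift (hθ0 : 0 ≤ θ) (hθ1 : θ < 1) (h : x.val 0 = y.val 0) :
    dTheta θ x y = θ * dTheta θ (shift x) (shift y) := by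
  unfold dTheta
  rw [(summable_dTheta hθ0 hθ1 x y).tsum_eq_zero_add, ← tsum_mul_left]
  simp only [h, if_true, mul_zero, zero_add, pow_succ', mul_assoc]
  rfl

lemma dTheta_le_dTheta_shift (hθ0 : 0 ≤ θ) (hθ1 : θ < 1) (h : x.val 0 = y.val 0) :
    dTheta θ x y ≤ dTheta θ (shift x) (shift y) := by
  rw [dTheta_eq_mul_dTheta_shift hθ0 hθ1 h]
  exact mul_le_of_le_one_left (dTheta_nonneg hθ0 _ _) hθ1.le

lemma continuous_dTheta_left (hθ0 : 0 ≤ θ) (hθ1 : θ < 1) (y : SigmaA N A) :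
    Continuous fun x => dTheta θ x y := by
  refine continuous_tsum (fun i => ?_) (summable_geometric_of_lt_one hθ0 hθ1) fun i x => ?_
  · have hi : Continuous fun x : SigmaA N A => x.val i :=
      (continuous_apply i).comp continuous_subtype_val
    exact continuous_const.mul ((continuous_of_discreteTopology
      (f := fun a => if a = y.val i then (0 : ℝ) else 1)).comp hi)
  · rw [norm_mul, norm_pow, Real.norm_of_nonneg hθ0]
    exact mul_le_of_le_one_right (pow_nonneg hθ0 i) (by split_ifs <;> simp)

/-- `dTheta θ` as a pseudometric, to access the library's theory of Lipschitz functions. Its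
topology is not the subspace topology definitionally, so it is not an instance. -/
noncomputable abbrev thetaPseudoMetric (hθ0 : 0 ≤ θ) (hθ1 : θ < 1) :
    PseudoMetricSpace (SigmaA N A) where
  dist := dTheta θ
  dist_self := dTheta_self θ
  dist_comm := dTheta_comm θ
  dist_triangle := dTheta_triangle hθ0 hθ1

/-- The distance `d_θ + d` on `Σ_A^+ × Y`. -/
noncomputable def prodDist {Y : Type*} [PseudoMetricSpace Y] (θ : ℝ) (p q : SigmaA N A × Y) : ℝ :=
  dTheta θ p.1 q.1 + dist p.2 q.2

variable {Y : Type*} [PseudoMetricSpace Y]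

lemma prodDist_nonneg (hθ0 : 0 ≤ θ) (p q : SigmaA N A × Y) : 0 ≤ prodDist θ p q :=
  add_nonneg (dTheta_nonneg hθ0 _ _) dist_nonneg

lemma prodDist_le [BoundedSpace Y] (hθ0 : 0 ≤ θ) (hθ1 : θ < 1) (p q : SigmaA N A × Y) :
    prodDist θ p q ≤ (1 - θ)⁻¹ + Metric.diam (univ : Set Y) :=
  add_le_add (dTheta_le hθ0 hθ1 _ _)
    (Metric.dist_le_diam_of_mem (Bornology.IsBounded.all _) (mem_univ _) (mem_univ _))

lemma tendsto_dTheta_self (hθ0 : 0 ≤ θ) (hθ1 : θ < 1) (y : SigmaA N A) :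
    Tendsto (fun x => dTheta θ x y) (𝓝 y) (𝓝 0) := by
  simpa only [dTheta_self] using (continuous_dTheta_left hθ0 hθ1 y).tendsto y

lemma tendsto_prodDist_self (hθ0 : 0 ≤ θ) (hθ1 : θ < 1) (q : SigmaA N A × Y) :
    Tendsto (fun p => prodDist θ p q) (𝓝 q) (𝓝 0) := by
  have hsnd : Tendsto (fun p : SigmaA N A × Y => dist p.2 q.2) (𝓝 q) (𝓝 0) :=
    tendsto_iff_dist_tendsto_zero.mp continuous_snd.continuousAt
  simpa only [prodDist, comp_apply, add_zero] using
    ((tendsto_dTheta_self hθ0 hθ1 q.1).comp continuous_fst.continuousAt).add hsnd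

end SymbolicMetric

/-! ### Lipschitz functions -/

section Lipschitz

variable {X : Type*} {d : X → X → ℝ} {φ : X → ℝ}

lemma LipD.exists_nonneg (hd : ∀ x y, 0 ≤ d x y) (hφ : LipD d φ) :
    ∃ L, 0 ≤ L ∧ LipWithD d L φ := by
  obtain ⟨L, hL⟩ := hφ
  exact ⟨|L|, abs_nonneg L, fun x y =>
    (hL x y).trans (mul_le_mul_of_nonneg_right (le_abs_self L) (hd x y))⟩

lemma LipD.continuous [TopologicalSpace X] (hd : ∀ y, Tendsto (fun x => d x y) (𝓝 y) (𝓝 0))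
    (hφ : LipD d φ) : Continuous φ := by
  obtain ⟨L, hL⟩ := hφ
  refine continuous_iff_continuousAt.mpr fun y => tendsto_iff_dist_tendsto_zero.mpr ?_
  refine squeeze_zero (fun _ => dist_nonneg) (fun x => hL x y) ?_
  simpa only [mul_zero] using (hd y).const_mul L

lemma LipD.exists_abs_le {M : ℝ} (hd : ∀ x y, 0 ≤ d x y) (hM : ∀ x y, d x y ≤ M)
    (hφ : LipD d φ) : ∃ B, 0 ≤ B ∧ ∀ x, |φ x| ≤ B := by
  obtain ⟨L, hL0, hL⟩ := hφ.exists_nonneg hd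
  rcases isEmpty_or_nonempty X with _ | ⟨⟨x₀⟩⟩
  · exact ⟨0, le_rfl, isEmptyElim⟩
  · have hB : ∀ x, |φ x| ≤ |φ x₀| + L * M := fun x => by
      linarith [abs_sub_abs_le_abs_sub (φ x) (φ x₀), hL x x₀,
        mul_le_mul_of_nonneg_left (hM x x₀) hL0]
    exact ⟨_, (abs_nonneg _).trans (hB x₀), hB⟩

lemma LipD.thetaNorm_lt_top {M : ℝ} (hd : ∀ x y, 0 ≤ d x y) (hM : ∀ x y, d x y ≤ M)
    (hφ : LipD d φ) : thetaNorm d φ < ⊤ := by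
  obtain ⟨B, -, hB⟩ := hφ.exists_abs_le hd hM
  obtain ⟨L, hL0, hL⟩ := hφ.exists_nonneg hd
  refine ENNReal.add_lt_top.mpr ⟨?_, ?_⟩
  · exact (iSup_le fun x => ENNReal.ofReal_le_ofReal (hB x)).trans_lt ENNReal.ofReal_lt_top
  · refine (iSup₂_le fun x y => ENNReal.ofReal_le_ofReal ?_).trans_lt
      (ENNReal.ofReal_lt_top (r := L))
    exact div_le_of_le_mul₀ (hd x y) hL0 (hL x y)

lemma ofReal_abs_le_thetaNorm (d : X → X → ℝ) (φ : X → ℝ) (x : X) :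
    ENNReal.ofReal |φ x| ≤ thetaNorm d φ :=
  (le_iSup (fun x => ENNReal.ofReal |φ x|) x).trans le_self_add

-- The quotients defining `lipConst` take the junk value `0` where `d x y = 0`; hence `hd0`.
lemma lipD_of_thetaNorm_lt_top (hd : ∀ x y, 0 ≤ d x y) (hd0 : ∀ x y, d x y = 0 → x = y)
    (hφ : thetaNorm d φ < ⊤) : LipD d φ := by
  refine ⟨(thetaNorm d φ).toReal, fun x y => ?_⟩
  have hxy : ENNReal.ofReal (|φ x - φ y| / d x y) ≤ thetaNorm d φ :=
    (le_iSup₂ (f := fun x y => ENNReal.ofReal (|φ x - φ y| / d x y)) x y).trans le_add_self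
  rcases (hd x y).eq_or_lt with h0 | h0
  · rw [hd0 x y h0.symm, sub_self, abs_zero]
    exact mul_nonneg ENNReal.toReal_nonneg (hd y y)
  · exact (div_le_iff₀ h0).mp ((ENNReal.ofReal_le_iff_le_toReal hφ.ne).mp hxy)

lemma exists_lipschitzWith_ae_eq_of_tendsto [PseudoMetricSpace X] [MeasurableSpace X]
    {μ : Measure X} {C : ℝ≥0} {g : ℕ → X → ℝ} (hg : ∀ n, LipschitzWith C (g n))
    (hlim : ∀ᵐ x ∂μ, Tendsto (fun n => g n x) atTop (𝓝 (φ x))) :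
    ∃ ψ, ψ =ᵐ[μ] φ ∧ LipschitzWith C ψ := by
  have hφ : LipschitzOnWith C φ {x | Tendsto (fun n => g n x) atTop (𝓝 (φ x))} :=
    LipschitzOnWith.of_dist_le_mul fun x hx y hy =>
      le_of_tendsto' (hx.dist hy) fun n => (hg n).dist_le_mul x y
  obtain ⟨ψ, hψ, hψφ⟩ := hφ.extend_real
  exact ⟨ψ, hlim.mono fun x hx => (hψφ hx).symm, hψ⟩

lemma exists_lipD_dTheta_ae_eq_of_tendsto {θ : ℝ} (hθ0 : 0 ≤ θ) (hθ1 : θ < 1)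
    {m : Measure (SigmaA N A)} {C : ℝ} (hC : 0 ≤ C) {φ : SigmaA N A → ℝ}
    {g : ℕ → SigmaA N A → ℝ} (hg : ∀ n, LipWithD (dTheta θ) C (g n))
    (hlim : ∀ᵐ x ∂m, Tendsto (fun n => g n x) atTop (𝓝 (φ x))) :
    ∃ ψ, ψ =ᵐ[m] φ ∧ LipD (dTheta θ) ψ := by
  let : PseudoMetricSpace (SigmaA N A) := thetaPseudoMetric hθ0 hθ1
  obtain ⟨ψ, hψφ, hψ⟩ := exists_lipschitzWith_ae_eq_of_tendsto
    (fun n => LipschitzWith.of_dist_le_mul (K := ⟨C, hC⟩) (hg n)) hlim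
  exact ⟨ψ, hψφ, C, hψ.dist_le_mul⟩

end Lipschitz

/-! ### Cylinders -/

section Cylinders

lemma measurable_shift : Measurable (shift : SigmaA N A → SigmaA N A) := by
  refine Measurable.subtype_mk (measurable_pi_iff.mpr fun i => ?_)
  exact (measurable_pi_apply (i + 1)).comp measurable_subtype_coe

lemma measurable_coord (i : ℕ) : Measurable fun x : SigmaA N A => x.val i :=
  (measurable_pi_apply i).comp measurable_subtype_coe

lemma iterate_shift_apply (n : ℕ) (x : SigmaA N A) (j : ℕ) :
    (shift^[n] x).val j = x.val (j + n) := by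
  induction n generalizing x with
  | zero => rfl
  | succ _ ih => exact ih (shift x)

lemma measurableSet_cylinder (n : ℕ) (w : Fin (n + 1) → Fin N) :
    MeasurableSet (cylinder n w : Set (SigmaA N A)) := by
  have h : (cylinder n w : Set (SigmaA N A)) = ⋂ i : Fin (n + 1), {x | x.val i = w i} := by
    ext x
    simp [cylinder]
  rw [h]
  exact MeasurableSet.iInter fun i => measurable_coord _ (measurableSet_singleton (w i))

lemma shift_preimage_cylinder_inter (i : Fin N) (n : ℕ) (w : Fin (n + 1) → Fin N) :
    shift ⁻¹' (cylinder n w) ∩ {x : SigmaA N A | x.val 0 = i} =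
      cylinder (n + 1) (Fin.cons i w : Fin (n + 2) → Fin N) := by
  ext x
  simp only [cylinder, mem_inter_iff, mem_preimage, mem_ofPred_eq, shift]
  rw [Fin.forall_fin_succ (P := fun j => x.val j = (Fin.cons i w : Fin (n + 2) → Fin N) j)]
  simp [and_comm]

lemma preimage_coord_eq_iUnion_cylinder (k : ℕ) (a : Fin N) :
    (fun x : SigmaA N A => x.val k) ⁻¹' {a} =
      ⋃ w : {w : Fin (k + 1) → Fin N // w (Fin.last k) = a}, cylinder k w.val := by
  ext x
  simp only [mem_preimage, mem_singleton_iff, mem_iUnion]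
  constructor
  · exact fun h => ⟨⟨fun i => x.val i, h⟩, fun i => rfl⟩
  · rintro ⟨⟨w, hw⟩, h⟩
    exact (h (Fin.last k)).trans hw

/-- The family of all cylinder sets, a generating π-system of `Σ_A^+`. -/
def cylinders (N : ℕ) (A : Fin N → Fin N → Bool) : Set (Set (SigmaA N A)) :=
  {s | ∃ (n : ℕ) (w : Fin (n + 1) → Fin N), s = cylinder n w}

lemma generateFrom_cylinders :
    (inferInstance : MeasurableSpace (SigmaA N A)) =
      MeasurableSpace.generateFrom (cylinders N A) := by
  apply le_antisymm
  · have hval : Measurable[MeasurableSpace.generateFrom (cylinders N A)]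
        (Subtype.val : SigmaA N A → ℕ → Fin N) := by
      let := MeasurableSpace.generateFrom (cylinders N A)
      refine measurable_pi_iff.mpr fun k => measurable_to_countable' fun a => ?_
      rw [preimage_coord_eq_iUnion_cylinder]
      exact MeasurableSet.iUnion fun w => MeasurableSpace.measurableSet_generateFrom ⟨k, w.val, rfl⟩
    exact measurable_iff_comap_le.mp hval
  · refine MeasurableSpace.generateFrom_le ?_
    rintro _ ⟨n, w, rfl⟩
    exact measurableSet_cylinder n w

lemma cylinder_subset_of_inter_nonempty {n k : ℕ} (hnk : n ≤ k) {v : Fin (n + 1) → Fin N}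
    {w : Fin (k + 1) → Fin N} (h : ((cylinder n v : Set (SigmaA N A)) ∩ cylinder k w).Nonempty) :
    (cylinder k w : Set (SigmaA N A)) ⊆ cylinder n v := by
  obtain ⟨x, hxv, hxw⟩ := h
  intro y hy i
  have hi : (i : ℕ) < k + 1 := by omega
  exact (hy ⟨i, hi⟩).trans ((hxw ⟨i, hi⟩).symm.trans (hxv i))

lemma isPiSystem_cylinders : IsPiSystem (cylinders N A) := by
  rintro _ ⟨n, v, rfl⟩ _ ⟨k, w, rfl⟩ h
  rcases le_total n k with hnk | hkn
  · exact ⟨k, w, inter_eq_right.mpr (cylinder_subset_of_inter_nonempty hnk h)⟩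
  · rw [inter_comm] at h ⊢
    exact ⟨n, v, inter_eq_right.mpr (cylinder_subset_of_inter_nonempty hkn h)⟩

lemma measure_ext_of_cylinder {μ ν : Measure (SigmaA N A)} [IsFiniteMeasure μ]
    (h : ∀ (n : ℕ) (w : Fin (n + 1) → Fin N), μ (cylinder n w) = ν (cylinder n w)) : μ = ν := by
  refine Measure.ext_of_generateFrom_of_cover_subset (S := cylinders N A)
    (T := range fun w : Fin 1 → Fin N => (cylinder 0 w : Set (SigmaA N A)))
    generateFrom_cylinders isPiSystem_cylinders ?_ (countable_range _) ?_
    (fun _ _ => measure_ne_top _ _) ?_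
  · rintro _ ⟨w, rfl⟩
    exact ⟨0, w, rfl⟩
  · exact sUnion_eq_univ_iff.mpr fun x =>
      ⟨_, ⟨fun i : Fin 1 => x.val i, rfl⟩, fun i => rfl⟩
  · rintro _ ⟨n, w, rfl⟩
    exact h n w

end Cylinders

/-! ### The transfer operator of a Markov measure -/

section TransferOperator

open Classical in
/-- The inverse branch `x ↦ ix` of the shift, made total by the identity where `ix` is not
admissible. -/
noncomputable def prependD (i : Fin N) (x : SigmaA N A) : SigmaA N A :=
  if h : A i (x.val 0) = true then prepend i x h else x

lemma prependD_of_admissible {i : Fin N} {x : SigmaA N A} (h : A i (x.val 0) = true) :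
    prependD i x = prepend i x h :=
  dif_pos h

lemma prependD_shift (x : SigmaA N A) : prependD (x.val 0) (shift x) = x := by
  rw [prependD_of_admissible (x.prop 0)]
  ext (_ | k) <;> rfl

lemma measurable_prependD (i : Fin N) :
    Measurable (prependD i : SigmaA N A → SigmaA N A) := by
  classical
  have hs : MeasurableSet {x : SigmaA N A | A i (x.val 0) = true} :=
    measurable_coord 0 (MeasurableSet.of_discrete (s := {a | A i a = true}))
  refine Measurable.dite (s := {x : SigmaA N A | A i (x.val 0) = true})
    (f := fun x => prepend i x.1 x.2) (g := fun x => x.1) ?_ measurable_subtype_coe hs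
  refine Measurable.subtype_mk (measurable_pi_iff.mpr ?_)
  rintro (_ | k)
  · exact measurable_const
  · exact (measurable_coord k).comp measurable_subtype_coe

/-- `q i j` is the conditional `m`-probability of the first symbol `i` given the second symbol `j`.
The inequality in `sum_le_one` accommodates symbols `j` of measure zero. -/
structure IsBackwardWeight (m : Measure (SigmaA N A)) (q : Fin N → Fin N → ℝ≥0) : Prop where
  sum_le_one : ∀ j, ∑ i, q i j ≤ 1
  eq_zero : ∀ i j, A i j = false → q i j = 0
  map_shift_restrict : ∀ i,
    (m.restrict {x | x.val 0 = i}).map shift = m.withDensity fun x => q i (x.val 0)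

lemma IsMarkov.exists_isBackwardWeight {m : Measure (SigmaA N A)} [IsFiniteMeasure m]
    (hm : IsMarkov m) : ∃ q, IsBackwardWeight m q := by
  obtain ⟨p, P, hp, -, hpP, hA, hcyl⟩ := hm
  have hp_top : ∀ j, p j ≠ ⊤ := fun j =>
    ne_top_of_le_ne_top one_ne_top
      (hp ▸ Finset.single_le_sum (fun _ _ => zero_le) (Finset.mem_univ j))
  have hflow_le : ∀ i j, p i * P i j ≤ p j := fun i j =>
    hpP j ▸ Finset.single_le_sum (f := fun i => p i * P i j) (fun _ _ => zero_le)
      (Finset.mem_univ i)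
  have hq_top : ∀ i j, p i * P i j / p j ≠ ⊤ := fun i j =>
    ne_top_of_le_ne_top one_ne_top (ENNReal.div_le_of_le_mul (by simpa using hflow_le i j))
  refine ⟨fun i j => (p i * P i j / p j).toNNReal, fun j => ?_, fun i j h => by simp [hA i j h],
    fun i => measure_ext_of_cylinder fun n w => ?_⟩
  · rw [← ENNReal.coe_le_coe, ENNReal.ofNNReal_finsetSum]
    simp only [ENNReal.coe_toNNReal (hq_top _ j)]
    simp only [div_eq_mul_inv]
    rw [← Finset.sum_mul, hpP j]
    exact ENNReal.mul_inv_le_one _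
  · have hconst : ∫⁻ x in cylinder n w, ((p i * P i (x.val 0) / p (x.val 0)).toNNReal : ℝ≥0∞) ∂m =
        ∫⁻ _ in cylinder n w, p i * P i (w 0) / p (w 0) ∂m := by
      refine setLIntegral_congr_fun (measurableSet_cylinder n w) fun x hx => ?_
      have hx0 : x.val 0 = w 0 := hx 0
      simp only [hx0, ENNReal.coe_toNNReal (hq_top i (w 0))]
    have hcancel : p i * P i (w 0) / p (w 0) * p (w 0) = p i * P i (w 0) :=
      ENNReal.div_mul_cancel' (fun h0 => le_zero_iff.mp (h0 ▸ hflow_le i (w 0)))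
        fun htop => absurd htop (hp_top _)
    rw [Measure.map_apply measurable_shift (measurableSet_cylinder n w),
      Measure.restrict_apply (measurable_shift (measurableSet_cylinder n w)),
      shift_preimage_cylinder_inter, withDensity_apply _ (measurableSet_cylinder n w), hconst,
      setLIntegral_const, hcyl, hcyl, Fin.prod_univ_succ, ← mul_assoc, ← mul_assoc, hcancel]
    rfl

variable {q : Fin N → Fin N → ℝ≥0} {h : SigmaA N A → ℝ} {m : Measure (SigmaA N A)}

/-- The transfer (Perron–Frobenius) operator of the backward weights `q`, defined pointwise rather
than up to null sets. -/
noncomputable def transferOp (q : Fin N → Fin N → ℝ≥0) (h : SigmaA N A → ℝ) (x : SigmaA N A) : ℝ :=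
  ∑ i, q i (x.val 0) * h (prependD i x)

lemma measurable_weight_coord_zero (q : Fin N → Fin N → ℝ≥0) (i : Fin N) :
    Measurable fun x : SigmaA N A => q i (x.val 0) :=
  (measurable_of_finite (q i)).comp (measurable_coord 0)

lemma measurable_transferOp (hh : Measurable h) : Measurable (transferOp q h) :=
  Finset.measurable_sum _ fun i _ =>
    (measurable_weight_coord_zero q i).coe_nnreal_real.mul (hh.comp (measurable_prependD i))

lemma sum_weight_mul_le (hq : ∀ j, ∑ i, q i j ≤ 1) {B : ℝ} (hB : 0 ≤ B) (j : Fin N) :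
    ∑ i, (q i j : ℝ) * B ≤ B := by
  rw [← Finset.sum_mul]
  exact mul_le_of_le_one_left hB (by exact_mod_cast hq j)

lemma abs_transferOp_le (hq : ∀ j, ∑ i, q i j ≤ 1) {B : ℝ} (hB : ∀ x, |h x| ≤ B)
    (x : SigmaA N A) : |transferOp q h x| ≤ B := by
  refine (Finset.abs_sum_le_sum_abs _ _).trans ((Finset.sum_le_sum fun i _ => ?_).trans
    (sum_weight_mul_le hq ((abs_nonneg _).trans (hB x)) (x.val 0)))
  rw [abs_mul, NNReal.abs_eq]
  exact mul_le_mul_of_nonneg_left (hB _) (NNReal.coe_nonneg _)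

lemma IsBackwardWeight.setIntegral_weight_mul (hq : IsBackwardWeight m q) (hh : Measurable h)
    (i : Fin N) {E : Set (SigmaA N A)} (hE : MeasurableSet E) :
    ∫ x in E, q i (x.val 0) * h (prependD i x) ∂m =
      ∫ x in shift ⁻¹' E ∩ {x | x.val 0 = i}, h x ∂m := by
  have hi : MeasurableSet {x : SigmaA N A | x.val 0 = i} :=
    measurable_coord 0 (measurableSet_singleton i)
  calc ∫ x in E, q i (x.val 0) * h (prependD i x) ∂m
      = ∫ x in E, h (prependD i x) ∂(m.restrict {x | x.val 0 = i}).map shift := by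
        rw [hq.map_shift_restrict, restrict_withDensity hE,
          integral_withDensity_eq_integral_smul (measurable_weight_coord_zero q i)]
        rfl
    _ = ∫ x in shift ⁻¹' E ∩ {x | x.val 0 = i}, h (prependD i (shift x)) ∂m := by
        rw [setIntegral_map (f := fun x => h (prependD i x)) hE
          (hh.comp (measurable_prependD i)).aestronglyMeasurable measurable_shift.aemeasurable,
          Measure.restrict_restrict (measurable_shift hE)]
    _ = ∫ x in shift ⁻¹' E ∩ {x | x.val 0 = i}, h x ∂m :=
        setIntegral_congr_fun ((measurable_shift hE).inter hi) fun x hx => by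
          rw [← (hx.2 : x.val 0 = i), prependD_shift]

lemma IsBackwardWeight.setIntegral_transferOp [IsFiniteMeasure m] (hq : IsBackwardWeight m q)
    (hh : Measurable h) {B : ℝ} (hB : ∀ x, |h x| ≤ B) {E : Set (SigmaA N A)}
    (hE : MeasurableSet E) :
    ∫ x in E, transferOp q h x ∂m = ∫ x in shift ⁻¹' E, h x ∂m := by
  have hint : Integrable h m := .of_bound hh.aestronglyMeasurable B (.of_forall hB)
  have hweight : ∀ i, Integrable (fun x : SigmaA N A => (q i (x.val 0) : ℝ)) m := fun i =>
    (Integrable.of_finite (f := fun j => (q i j : ℝ))).comp_measurable (measurable_coord 0)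
  have hterm : ∀ i, Integrable (fun x => q i (x.val 0) * h (prependD i x)) m := fun i =>
    (hweight i).mul_bdd (hh.comp (measurable_prependD i)).aestronglyMeasurable
      (.of_forall fun x => hB (prependD i x))
  have hpart : shift ⁻¹' E = ⋃ i, shift ⁻¹' E ∩ {x : SigmaA N A | x.val 0 = i} := by
    ext x
    simp
  unfold transferOp
  rw [integral_finsetSum _ fun i _ => (hterm i).integrableOn, hpart, integral_iUnion_fintype]
  · exact Finset.sum_congr rfl fun i _ => hq.setIntegral_weight_mul hh i hE
  · exact fun i => (measurable_shift hE).inter (measurable_coord 0 (measurableSet_singleton i))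
  · exact fun i j hij => Set.disjoint_left.mpr fun x hi hj => hij (hi.2.symm.trans hj.2)
  · exact fun i => hint.integrableOn

lemma measurable_transferOp_iterate (hh : Measurable h) (n : ℕ) :
    Measurable ((transferOp q)^[n] h) := by
  induction n with
  | zero => exact hh
  | succ n ih =>
    rw [iterate_succ_apply']
    exact measurable_transferOp ih

lemma abs_transferOp_iterate_le (hq : ∀ j, ∑ i, q i j ≤ 1) {B : ℝ} (hB : ∀ x, |h x| ≤ B) (n : ℕ)
    (x : SigmaA N A) : |(transferOp q)^[n] h x| ≤ B := by
  induction n generalizing x with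
  | zero => exact hB x
  | succ n ih =>
    rw [iterate_succ_apply']
    exact abs_transferOp_le hq ih x

lemma IsBackwardWeight.setIntegral_transferOp_iterate [IsFiniteMeasure m]
    (hq : IsBackwardWeight m q) (hh : Measurable h) {B : ℝ} (hB : ∀ x, |h x| ≤ B) (n : ℕ)
    {E : Set (SigmaA N A)} (hE : MeasurableSet E) :
    ∫ x in E, (transferOp q)^[n] h x ∂m = ∫ x in shift^[n] ⁻¹' E, h x ∂m := by
  induction n generalizing E with
  | zero => rfl
  | succ n ih =>
    rw [iterate_succ_apply', hq.setIntegral_transferOp (measurable_transferOp_iterate hh n)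
      (abs_transferOp_iterate_le hq.sum_le_one hB n) hE, ih (measurable_shift hE),
      iterate_succ', preimage_comp]

/-- `h` is `C`-Lipschitz along the inverse branches of `σⁿ`, as a function of the image under `σⁿ`.
Agreement of `n + 1` symbols makes the images share their first symbol, hence their branches. -/
def LipOnBranches (θ C : ℝ) (n : ℕ) (h : SigmaA N A → ℝ) : Prop :=
  ∀ x y : SigmaA N A, (∀ i ≤ n, x.val i = y.val i) →
    |h x - h y| ≤ C * dTheta θ (shift^[n] x) (shift^[n] y)

lemma LipOnBranches.map_transferOp {θ C : ℝ} {n : ℕ} (hθ0 : 0 ≤ θ) (hC : 0 ≤ C)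
    (hq : ∀ j, ∑ i, q i j ≤ 1) (hqA : ∀ i j, A i j = false → q i j = 0)
    (hh : LipOnBranches θ C (n + 1) h) : LipOnBranches θ C n (transferOp q h) := by
  intro x y hxy
  have h0 : x.val 0 = y.val 0 := hxy 0 n.zero_le
  have hbranch : ∀ i, A i (x.val 0) = true → |h (prependD i x) - h (prependD i y)| ≤
      C * dTheta θ (shift^[n] x) (shift^[n] y) := fun i hi => by
    rw [prependD_of_admissible hi, prependD_of_admissible (h0 ▸ hi)]
    refine hh _ _ ?_
    rintro (_ | k) hk
    · rfl
    · exact hxy k (by omega)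
  unfold transferOp
  rw [← h0, ← Finset.sum_sub_distrib]
  refine (Finset.abs_sum_le_sum_abs _ _).trans ((Finset.sum_le_sum fun i _ => ?_).trans
    (sum_weight_mul_le hq (mul_nonneg hC (dTheta_nonneg hθ0 _ _)) (x.val 0)))
  rw [← mul_sub, abs_mul, NNReal.abs_eq]
  rcases Bool.eq_false_or_eq_true (A i (x.val 0)) with hi | hi
  · exact mul_le_mul_of_nonneg_left (hbranch i hi) (NNReal.coe_nonneg _)
  · simp [hqA i _ hi]

lemma LipOnBranches.map_transferOp_iterate {θ C : ℝ} {n : ℕ} (hθ0 : 0 ≤ θ) (hC : 0 ≤ C)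
    (hq : ∀ j, ∑ i, q i j ≤ 1) (hqA : ∀ i j, A i j = false → q i j = 0)
    (hh : LipOnBranches θ C n h) : LipOnBranches θ C 0 ((transferOp q)^[n] h) := by
  induction n generalizing h with
  | zero => exact hh
  | succ n ih => exact ih (hh.map_transferOp hθ0 hC hq hqA)

lemma LipOnBranches.lipWithD {θ C B : ℝ} (hθ0 : 0 ≤ θ) (hθ1 : θ < 1) (hC : 0 ≤ C)
    (hh : LipOnBranches θ C 0 h) (hB : ∀ x, |h x| ≤ B) :
    LipWithD (dTheta θ) (C + 2 * B) h := by
  intro x y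
  have hd := dTheta_nonneg hθ0 x y
  have hB0 : 0 ≤ B := (abs_nonneg _).trans (hB x)
  rw [add_mul]
  by_cases h0 : x.val 0 = y.val 0
  · exact (hh x y fun i hi => by rwa [Nat.le_zero.mp hi]).trans
      (le_add_of_nonneg_right (by positivity))
  · have h1 : 1 ≤ dTheta θ x y := by simpa using pow_le_dTheta hθ0 hθ1 h0
    calc |h x - h y| ≤ 2 * B := by linarith [abs_sub (h x) (h y), hB x, hB y]
      _ ≤ 2 * B * dTheta θ x y := le_mul_of_one_le_right (by positivity) h1
      _ ≤ C * dTheta θ x y + 2 * B * dTheta θ x y := le_add_of_nonneg_left (by positivity)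

end TransferOperator

/-! ### The skew product -/

section SkewProduct

variable {Y : Type*} {θ α H : ℝ}

lemma fst_skew_iterate (G : SigmaA N A × Y → Y) (n : ℕ) (p : SigmaA N A × Y) :
    ((skew G)^[n] p).1 = shift^[n] p.1 :=
  (Semiconj.iterate_right (f := Prod.fst) (fun _ => rfl : Semiconj _ (skew G) shift) n).eq p

lemma snd_skew_iterate_succ (G : SigmaA N A × Y → Y) (n : ℕ) (p : SigmaA N A × Y) :
    ((skew G)^[n + 1] p).2 = G (shift^[n] p.1, ((skew G)^[n] p).2) := by
  rw [iterate_succ_apply', ← fst_skew_iterate]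
  rfl

lemma skew_iterate_preimage_fst (G : SigmaA N A × Y → Y) (n : ℕ) (E : Set (SigmaA N A)) :
    (skew G)^[n] ⁻¹' (Prod.fst ⁻¹' E) = Prod.fst ⁻¹' (shift^[n] ⁻¹' E) := by
  ext p
  simp only [mem_preimage, fst_skew_iterate]

variable [MetricSpace Y] {G : SigmaA N A × Y → Y}

lemma CondG1.dist_skew_iterate_le (hG1 : CondG1 G α) (hα0 : 0 ≤ α) (n : ℕ) (x : SigmaA N A)
    (z z' : Y) : dist ((skew G)^[n] (x, z)).2 ((skew G)^[n] (x, z')).2 ≤ α ^ n * dist z z' := by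
  induction n with
  | zero => simp
  | succ n ih =>
    rw [snd_skew_iterate_succ, snd_skew_iterate_succ, pow_succ', mul_assoc]
    exact (hG1 _ _ _).trans (mul_le_mul_of_nonneg_left ih hα0)

lemma abs_comp_skew_iterate_sub_le [BoundedSpace Y] (hα0 : 0 ≤ α) (hG1 : CondG1 G α) {L : ℝ}
    (hL0 : 0 ≤ L) {f : SigmaA N A × Y → ℝ} (hL : LipWithD (prodDist θ) L f) (n : ℕ)
    (p : SigmaA N A × Y) (z : Y) :
    |f ((skew G)^[n] p) - f ((skew G)^[n] (p.1, z))| ≤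
      L * (α ^ n * Metric.diam (univ : Set Y)) := by
  refine (hL _ _).trans (mul_le_mul_of_nonneg_left ?_ hL0)
  rw [prodDist, fst_skew_iterate, fst_skew_iterate, dTheta_self, zero_add]
  refine (hG1.dist_skew_iterate_le hα0 n p.1 p.2 z).trans ?_
  gcongr
  exact Metric.dist_le_diam_of_mem (Bornology.IsBounded.all _) (mem_univ _) (mem_univ _)

lemma CondG2.abs (hG2 : CondG2 θ G H) (hθ0 : 0 ≤ θ) : CondG2 θ G |H| := fun z x y =>
  (hG2 z x y).trans (mul_le_mul_of_nonneg_right (le_abs_self H) (dTheta_nonneg hθ0 x y))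

-- `c = H / (1 - α)` is the fixed point of `c ↦ α c + H`, the recursion satisfied by the constants.
lemma dist_skew_iterate_le_of_forall_le_eq (hθ0 : 0 ≤ θ) (hθ1 : θ < 1) (hα0 : 0 ≤ α) (hα1 : α < 1)
    (hH : 0 ≤ H) (hG1 : CondG1 G α) (hG2 : CondG2 θ G H) {n : ℕ} {x y : SigmaA N A}
    (hxy : ∀ i ≤ n, x.val i = y.val i) (z : Y) :
    dist ((skew G)^[n] (x, z)).2 ((skew G)^[n] (y, z)).2 ≤
      H / (1 - α) * dTheta θ (shift^[n] x) (shift^[n] y) := by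
  have hα : 0 < 1 - α := sub_pos.mpr hα1
  have hc0 : 0 ≤ H / (1 - α) := by positivity
  induction n with
  | zero => simpa using mul_nonneg hc0 (dTheta_nonneg hθ0 x y)
  | succ n ih =>
    specialize ih fun i hi => hxy i (hi.trans n.le_succ)
    have h0 : (shift^[n] x).val 0 = (shift^[n] y).val 0 := by
      rw [iterate_shift_apply, iterate_shift_apply]
      exact hxy _ (by omega)
    rw [snd_skew_iterate_succ, snd_skew_iterate_succ, iterate_succ_apply', iterate_succ_apply']
    set u := ((skew G)^[n] (x, z)).2
    set v := ((skew G)^[n] (y, z)).2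
    calc dist (G (shift^[n] x, u)) (G (shift^[n] y, v))
        ≤ dist (G (shift^[n] x, u)) (G (shift^[n] x, v)) +
          dist (G (shift^[n] x, v)) (G (shift^[n] y, v)) := dist_triangle _ _ _
      _ ≤ α * (H / (1 - α) * dTheta θ (shift^[n] x) (shift^[n] y)) +
          H * dTheta θ (shift^[n] x) (shift^[n] y) :=
        add_le_add ((hG1 _ _ _).trans (mul_le_mul_of_nonneg_left ih hα0)) (hG2 _ _ _)
      _ = H / (1 - α) * dTheta θ (shift^[n] x) (shift^[n] y) := by
        field_simp
        ring
      _ ≤ H / (1 - α) * dTheta θ (shift (shift^[n] x)) (shift (shift^[n] y)) :=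
        mul_le_mul_of_nonneg_left (dTheta_le_dTheta_shift hθ0 hθ1 h0) hc0

lemma lipOnBranches_comp_skew_iterate (hθ0 : 0 ≤ θ) (hθ1 : θ < 1) (hα0 : 0 ≤ α) (hα1 : α < 1)
    (hH : 0 ≤ H) (hG1 : CondG1 G α) (hG2 : CondG2 θ G H) {L : ℝ} (hL : 0 ≤ L)
    {f : SigmaA N A × Y → ℝ} (hf : LipWithD (prodDist θ) L f) (n : ℕ) (z : Y) :
    LipOnBranches θ (L * (1 + H / (1 - α))) n fun x => f ((skew G)^[n] (x, z)) := by
  intro x y hxy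
  refine (hf _ _).trans ?_
  rw [prodDist, fst_skew_iterate, fst_skew_iterate, mul_assoc, add_mul, one_mul]
  gcongr
  exact dist_skew_iterate_le_of_forall_le_eq hθ0 hθ1 hα0 hα1 hH hG1 hG2 hxy z

end SkewProduct

/-! ### Marginal densities -/

section Marginals

variable {X Y : Type*} [MeasurableSpace X] [MeasurableSpace Y]

lemma fst_withDensity_le_smul {μ : Measure (X × Y)} {u : X × Y → ℝ≥0∞} {c : ℝ≥0∞}
    (hu : ∀ p, u p ≤ c) : (μ.withDensity u).fst ≤ c • μ.fst := by
  rw [Measure.fst, Measure.fst, ← Measure.map_smul, ← withDensity_const]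
  exact Measure.map_mono (withDensity_mono (.of_forall hu)) measurable_fst

lemma rnDeriv_ae_le_of_le_smul {μ ν : Measure X} [SigmaFinite ν] {c : ℝ≥0∞} (h : μ ≤ c • ν) :
    ∀ᵐ x ∂ν, μ.rnDeriv ν x ≤ c := by
  refine ae_le_of_forall_setLIntegral_le_of_sigmaFinite (Measure.measurable_rnDeriv μ ν)
    fun E _ _ => ?_
  calc ∫⁻ x in E, μ.rnDeriv ν x ∂ν ≤ μ E := Measure.setLIntegral_rnDeriv_le E
    _ ≤ c * ν E := h E
    _ = ∫⁻ _ in E, c ∂ν := (setLIntegral_const E c).symm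

lemma ae_abs_sub_le_of_forall_setIntegral {μ : Measure X} [IsFiniteMeasure μ] {f g : X → ℝ} {c : ℝ}
    (hf : Integrable f μ) (hg : Integrable g μ)
    (h : ∀ E, MeasurableSet E → |∫ x in E, f x ∂μ - ∫ x in E, g x ∂μ| ≤ c * μ.real E) :
    ∀ᵐ x ∂μ, |f x - g x| ≤ c := by
  have hc := integrable_const (μ := μ) c
  have hfg : f ≤ᵐ[μ] fun x => g x + c := by
    refine ae_le_of_forall_setIntegral_le hf (hg.add hc) fun E hE _ => ?_
    rw [integral_add hg.integrableOn hc.integrableOn, setIntegral_const, smul_eq_mul]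
    linarith [(abs_le.mp (h E hE)).2]
  have hgf : g ≤ᵐ[μ] fun x => f x + c := by
    refine ae_le_of_forall_setIntegral_le hg (hf.add hc) fun E hE _ => ?_
    rw [integral_add hf.integrableOn hc.integrableOn, setIntegral_const, smul_eq_mul]
    linarith [(abs_le.mp (h E hE)).1]
  filter_upwards [hfg, hgf] with x h₁ h₂
  exact abs_sub_le_iff.mpr ⟨by linarith, by linarith⟩

lemma wDist_le_add_univ [MetricSpace Y] (ν₁ ν₂ : Measure Y) :
    wDist ν₁ ν₂ ≤ ν₁ univ + ν₂ univ := by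
  refine iSup_le fun ⟨g, _, hg⟩ => ?_
  have hint : ∀ ν : Measure Y, ‖∫ z, g z ∂ν‖ₑ ≤ ν univ := fun ν =>
    calc ‖∫ z, g z ∂ν‖ₑ ≤ ∫⁻ z, ‖g z‖ₑ ∂ν := enorm_integral_le_lintegral_enorm g
      _ ≤ ∫⁻ _, 1 ∂ν := lintegral_mono fun z => by
        rw [Real.enorm_eq_ofReal_abs]
        exact ENNReal.ofReal_le_one.mpr (hg z)
      _ = ν univ := lintegral_one
  rw [← Real.enorm_eq_ofReal_abs]
  exact enorm_sub_le.trans (add_le_add (hint ν₁) (hint ν₂))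

variable {m : Measure (SigmaA N A)}

section Fibers

variable {μ μ₁ μ₂ : Measure (SigmaA N A × K)}

lemma fiberR_univ [IsFiniteMeasure μ] (γ : SigmaA N A) :
    fiberR m μ γ univ = μ.fst.rnDeriv m γ := by
  have h : IsFiniteMeasure μ := inferInstance
  simp [fiberR, h]

lemma infNormPair_lt_top [SigmaFinite m] [IsFiniteMeasure μ₁] [IsFiniteMeasure μ₂] {c : ℝ≥0}
    (h₁ : μ₁.fst ≤ (c : ℝ≥0∞) • m) (h₂ : μ₂.fst ≤ (c : ℝ≥0∞) • m) : infNormPair m μ₁ μ₂ < ⊤ := by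
  refine (essSup_le_of_ae_le (c + c : ℝ≥0∞) ?_).trans_lt (by finiteness)
  filter_upwards [rnDeriv_ae_le_of_le_smul h₁, rnDeriv_ae_le_of_le_smul h₂] with γ hγ₁ hγ₂
  refine (wDist_le_add_univ _ _).trans ?_
  rw [fiberR_univ, fiberR_univ]
  exact add_le_add hγ₁ hγ₂

end Fibers

variable {μ₁ μ₂ : Measure (SigmaA N A × Y)}

lemma integrable_phiPair [IsFiniteMeasure μ₁] [IsFiniteMeasure μ₂] :
    Integrable (phiPair m μ₁ μ₂) m :=
  Measure.integrable_toReal_rnDeriv.sub Measure.integrable_toReal_rnDeriv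

lemma phiPair_zero_right (m : Measure (SigmaA N A)) (μ : Measure (SigmaA N A × Y)) :
    phiPair m μ 0 =ᵐ[m] fun γ => (μ.fst.rnDeriv m γ).toReal := by
  filter_upwards [Measure.rnDeriv_zero m] with γ hγ
  simp [phiPair, hγ]

lemma setIntegral_phiPair [SigmaFinite m] (h : MemABPair m μ₁ μ₂) (E : Set (SigmaA N A)) :
    ∫ γ in E, phiPair m μ₁ μ₂ γ ∂m = μ₁.fst.real E - μ₂.fst.real E := by
  obtain ⟨hac₁, hac₂, hfin₁, hfin₂⟩ := h
  rw [← Measure.setIntegral_toReal_rnDeriv hac₁, ← Measure.setIntegral_toReal_rnDeriv hac₂]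
  exact integral_sub Measure.integrable_toReal_rnDeriv.integrableOn
    Measure.integrable_toReal_rnDeriv.integrableOn

variable {μ : Measure (SigmaA N A × Y)} {f : SigmaA N A × Y → ℝ}

lemma memABPair_withDensity_ofReal (hf : Integrable f μ) :
    MemABPair μ.fst (μ.withDensity fun p => ENNReal.ofReal (f p))
      (μ.withDensity fun p => ENNReal.ofReal (-f p)) :=
  ⟨(withDensity_absolutelyContinuous μ _).map measurable_fst,
    (withDensity_absolutelyContinuous μ _).map measurable_fst,
    isFiniteMeasure_withDensity_ofReal hf.2, isFiniteMeasure_withDensity_ofReal hf.neg.2⟩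

lemma setIntegral_phiPair_withDensity_ofReal [IsFiniteMeasure μ] (hf : Integrable f μ)
    {E : Set (SigmaA N A)} (hE : MeasurableSet E) :
    ∫ γ in E, phiPair μ.fst (μ.withDensity fun p => ENNReal.ofReal (f p))
      (μ.withDensity fun p => ENNReal.ofReal (-f p)) γ ∂μ.fst = ∫ p in Prod.fst ⁻¹' E, f p ∂μ := by
  rw [setIntegral_phiPair (memABPair_withDensity_ofReal hf),
    integral_eq_lintegral_pos_part_sub_lintegral_neg_part hf.integrableOn, measureReal_def,
    measureReal_def, Measure.fst_apply hE, Measure.fst_apply hE,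
    withDensity_apply _ (measurable_fst hE), withDensity_apply _ (measurable_fst hE)]

end Marginals

/-! ### Uniqueness of the invariant base measure with Lipschitz density -/

section SpectralGap

variable {m : Measure (SigmaA N A)} {θ D r : ℝ} {Pσ : (SigmaA N A → ℝ) → SigmaA N A → ℝ}
  {φ : SigmaA N A → ℝ}

lemma IsPerronFrobenius.setIntegral (hPF : IsPerronFrobenius m Pσ) (hφ : Integrable φ m)
    {E : Set (SigmaA N A)} (hE : MeasurableSet E) :
    ∫ x in E, Pσ φ x ∂m = ∫ x in shift ⁻¹' E, φ x ∂m := by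
  have h := hPF φ (E.indicator 1) hφ (measurable_one.indicator hE)
    ⟨1, fun x => by by_cases hx : x ∈ E <;> simp [hx]⟩
  have hshift : ∀ x, E.indicator (1 : SigmaA N A → ℝ) (shift x) = (shift ⁻¹' E).indicator 1 x :=
    fun _ => rfl
  have hind : ∀ (F : Set (SigmaA N A)) (k : SigmaA N A → ℝ) x,
      k x * F.indicator 1 x = F.indicator k x := fun F k x => by by_cases hx : x ∈ F <;> simp [hx]
  simpa only [hshift, hind, integral_indicator hE, integral_indicator (measurable_shift hE)] using h

lemma IsPerronFrobenius.setIntegral_iterate (hPF : IsPerronFrobenius m Pσ)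
    (hφ : ∀ n, Integrable (Pσ^[n] φ) m) (n : ℕ) {E : Set (SigmaA N A)} (hE : MeasurableSet E) :
    ∫ x in E, Pσ^[n] φ x ∂m = ∫ x in shift^[n] ⁻¹' E, φ x ∂m := by
  induction n generalizing E with
  | zero => rfl
  | succ n ih =>
    rw [iterate_succ_apply', hPF.setIntegral (hφ n) hE, ih (measurable_shift hE), iterate_succ',
      preimage_comp]

lemma LipD.integrable [IsFiniteMeasure m] (hθ0 : 0 ≤ θ) (hθ1 : θ < 1) (hφ : LipD (dTheta θ) φ) :
    Integrable φ m := by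
  obtain ⟨B, -, hB⟩ := hφ.exists_abs_le (dTheta_nonneg hθ0) (dTheta_le hθ0 hθ1)
  exact .of_bound (hφ.continuous (tendsto_dTheta_self hθ0 hθ1)).aestronglyMeasurable B
    (.of_forall hB)

lemma HasGap.lipD_iterate (hgap : HasGap m θ Pσ D r) (hθ0 : 0 < θ) (hθ1 : θ < 1)
    (hφ : LipD (dTheta θ) φ) (hφ0 : ∫ x, φ x ∂m = 0) (n : ℕ) : LipD (dTheta θ) (Pσ^[n] φ) := by
  have hd := dTheta_nonneg (N := N) (A := A) hθ0.le
  exact lipD_of_thetaNorm_lt_top hd (fun x y => eq_of_dTheta_eq_zero hθ0 hθ1)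
    ((hgap φ hφ hφ0 n).trans_lt (ENNReal.mul_lt_top ENNReal.ofReal_lt_top
      (hφ.thetaNorm_lt_top hd (dTheta_le hθ0.le hθ1))))

lemma HasGap.tendsto_setIntegral_preimage_iterate [IsFiniteMeasure m] (hgap : HasGap m θ Pσ D r)
    (hPF : IsPerronFrobenius m Pσ) (hθ0 : 0 < θ) (hθ1 : θ < 1) (hr : |r| < 1)
    (hφ : LipD (dTheta θ) φ) (hφ0 : ∫ x, φ x ∂m = 0) {E : Set (SigmaA N A)}
    (hE : MeasurableSet E) :
    Tendsto (fun n => ∫ x in shift^[n] ⁻¹' E, φ x ∂m) atTop (𝓝 0) := by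
  set c : ℕ → ℝ≥0∞ := fun n => ENNReal.ofReal (D * r ^ n) * thetaNorm (dTheta θ) φ
  have hint : ∀ n, Integrable (Pσ^[n] φ) m := fun n =>
    (hgap.lipD_iterate hθ0 hθ1 hφ hφ0 n).integrable hθ0.le hθ1
  have hbound : ∀ n, ‖∫ x in shift^[n] ⁻¹' E, φ x ∂m‖ₑ ≤ c n * m E := fun n =>
    calc ‖∫ x in shift^[n] ⁻¹' E, φ x ∂m‖ₑ
        = ‖∫ x in E, Pσ^[n] φ x ∂m‖ₑ := by rw [hPF.setIntegral_iterate hint n hE]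
      _ ≤ ∫⁻ x in E, ‖Pσ^[n] φ x‖ₑ ∂m := enorm_integral_le_lintegral_enorm _
      _ ≤ ∫⁻ _ in E, c n ∂m := lintegral_mono fun x => by
        rw [Real.enorm_eq_ofReal_abs]
        exact (ofReal_abs_le_thetaNorm _ _ x).trans (hgap φ hφ hφ0 n)
      _ = c n * m E := setLIntegral_const E _
  have hc : Tendsto (fun n => c n * m E) atTop (𝓝 0) := by
    have hφ_top := hφ.thetaNorm_lt_top (dTheta_nonneg hθ0.le) (dTheta_le hθ0.le hθ1)
    have hDr := ENNReal.tendsto_ofReal ((tendsto_pow_atTop_nhds_zero_of_abs_lt_one hr).const_mul D)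
    simpa using ENNReal.Tendsto.mul_const
      (ENNReal.Tendsto.mul_const hDr (.inr hφ_top.ne)) (.inr (measure_ne_top m E))
  exact tendsto_zero_iff_enorm_tendsto_zero.mpr
    (tendsto_of_tendsto_of_tendsto_of_le_of_le tendsto_const_nhds hc (fun _ => zero_le) hbound)

lemma HasGap.eq_of_map_shift_eq [IsProbabilityMeasure m] (hgap : HasGap m θ Pσ D r)
    (hPF : IsPerronFrobenius m Pσ) (hθ0 : 0 < θ) (hθ1 : θ < 1) (hr : |r| < 1)
    (hm : m.map shift = m) {ν : Measure (SigmaA N A)} [IsProbabilityMeasure ν]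
    (hν : ν.map shift = ν) (hac : ν ≪ m) {ψ : SigmaA N A → ℝ}
    (hψ : ψ =ᵐ[m] fun γ => (ν.rnDeriv m γ).toReal) (hψL : LipD (dTheta θ) ψ) : ν = m := by
  have hint := hψL.integrable (m := m) hθ0.le hθ1
  have hsub : ∀ E, ∫ x in E, (ψ x - 1) ∂m = ν.real E - m.real E := fun E => by
    rw [integral_sub hint.integrableOn (integrable_const _), setIntegral_const, smul_eq_mul,
      mul_one, integral_congr_ae (ae_restrict_of_ae hψ), Measure.setIntegral_toReal_rnDeriv hac]
  have hmean : ∫ x, (ψ x - 1) ∂m = 0 := by simpa using hsub univ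
  have hlip : LipD (dTheta θ) fun x => ψ x - 1 :=
    hψL.imp fun L hL x y => by simpa using hL x y
  ext E hE
  have hinv : ∀ n, ∫ x in shift^[n] ⁻¹' E, (ψ x - 1) ∂m = ν.real E - m.real E := fun n => by
    rw [hsub,
      ((MeasurePreserving.mk measurable_shift hν).iterate n).measureReal_preimage
        hE.nullMeasurableSet,
      ((MeasurePreserving.mk measurable_shift hm).iterate n).measureReal_preimage
        hE.nullMeasurableSet]
  have hlim := hgap.tendsto_setIntegral_preimage_iterate hPF hθ0 hθ1 hr hlip hmean hE
  simp only [hinv] at hlim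
  exact (measureReal_eq_measureReal_iff).mp
    (sub_eq_zero.mp (tendsto_nhds_unique tendsto_const_nhds hlim))

lemma map_shift_fst_of_map_skew_eq {Y : Type*} [MeasurableSpace Y] {G : SigmaA N A × Y → Y}
    {μ : Measure (SigmaA N A × Y)} (hG : Measurable (skew G)) (hμ : μ.map (skew G) = μ) :
    μ.fst.map shift = μ.fst :=
  calc μ.fst.map shift = μ.map (shift ∘ Prod.fst) := Measure.map_map measurable_shift measurable_fst
    _ = (μ.map (skew G)).fst := (Measure.map_map measurable_fst hG).symm
    _ = μ.fst := by rw [hμ]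

end SpectralGap

/-! ### The marginal density of `f μ₀` -/

section MarginalDensity

variable {θ α H L B : ℝ} {q : Fin N → Fin N → ℝ≥0}

section Approximation

variable {Y : Type*} [MeasurableSpace Y] {G : SigmaA N A × Y → Y}
  {f : SigmaA N A × Y → ℝ} {μ : Measure (SigmaA N A × Y)}

lemma setIntegral_transferOp_iterate_comp_skew [IsFiniteMeasure μ] (hq : IsBackwardWeight μ.fst q)
    (hG : Measurable (skew G)) (hf : Measurable f) (hB : ∀ p, |f p| ≤ B) (n : ℕ) (z : Y)
    {E : Set (SigmaA N A)} (hE : MeasurableSet E) :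
    ∫ x in E, (transferOp q)^[n] (fun x => f ((skew G)^[n] (x, z))) x ∂μ.fst =
      ∫ p in (skew G)^[n] ⁻¹' (Prod.fst ⁻¹' E), f ((skew G)^[n] (p.1, z)) ∂μ := by
  have hmeas : Measurable fun x => f ((skew G)^[n] (x, z)) :=
    hf.comp ((hG.iterate n).comp measurable_prodMk_right)
  rw [hq.setIntegral_transferOp_iterate hmeas (fun x => hB _) n hE, Measure.fst,
    setIntegral_map (f := fun x => f ((skew G)^[n] (x, z))) (measurable_shift.iterate n hE)
      hmeas.aestronglyMeasurable measurable_fst.aemeasurable, skew_iterate_preimage_fst]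

variable [MetricSpace Y]

lemma abs_setIntegral_sub_transferOp_iterate_le [BoundedSpace Y] [IsFiniteMeasure μ]
    (hq : IsBackwardWeight μ.fst q) (hμ : MeasurePreserving (skew G) μ μ) (hα0 : 0 ≤ α)
    (hG1 : CondG1 G α) (hf : Measurable f) (hB : ∀ p, |f p| ≤ B) (hL0 : 0 ≤ L)
    (hL : LipWithD (prodDist θ) L f) (n : ℕ) (z : Y) {E : Set (SigmaA N A)} (hE : MeasurableSet E) :
    |∫ p in Prod.fst ⁻¹' E, f p ∂μ -
        ∫ x in E, (transferOp q)^[n] (fun x => f ((skew G)^[n] (x, z))) x ∂μ.fst| ≤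
      L * (α ^ n * Metric.diam (univ : Set Y)) * μ.fst.real E := by
  have hE' : MeasurableSet (Prod.fst ⁻¹' E : Set (SigmaA N A × Y)) := measurable_fst hE
  have hn := hμ.iterate n
  set S := (skew G)^[n] ⁻¹' (Prod.fst ⁻¹' E)
  have hinv : ∫ p in Prod.fst ⁻¹' E, f p ∂μ = ∫ p in S, f ((skew G)^[n] p) ∂μ := by
    conv_lhs => rw [← hn.map_eq]
    exact setIntegral_map hE' hf.aestronglyMeasurable hn.measurable.aemeasurable
  have hmass : μ.fst.real E = μ.real S := by
    rw [hn.measureReal_preimage hE'.nullMeasurableSet, measureReal_def, Measure.fst_apply hE,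
      measureReal_def]
  have hint : ∀ {g : SigmaA N A × Y → SigmaA N A × Y}, Measurable g →
      Integrable (fun p => f (g p)) μ := fun hg =>
    .of_bound (hf.comp hg).aestronglyMeasurable B (.of_forall fun p => hB _)
  have hint_base : Integrable (fun p : SigmaA N A × Y => f ((skew G)^[n] (p.1, z))) μ :=
    hint (hn.measurable.comp (measurable_prodMk_right.comp measurable_fst))
  rw [setIntegral_transferOp_iterate_comp_skew hq hμ.measurable hf hB n z hE, hinv, hmass,
    ← integral_sub (hint hn.measurable).integrableOn hint_base.integrableOn,
    ← Real.norm_eq_abs]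
  exact norm_setIntegral_le_of_norm_le_const (measure_lt_top _ _) fun p _ =>
    abs_comp_skew_iterate_sub_le hα0 hG1 hL0 hL n p z

lemma ae_tendsto_transferOp_iterate_comp_skew [BoundedSpace Y] [IsFiniteMeasure μ]
    (hq : IsBackwardWeight μ.fst q) (hμ : MeasurePreserving (skew G) μ μ) (hα0 : 0 ≤ α)
    (hα1 : α < 1) (hG1 : CondG1 G α) (hf : Measurable f) (hB : ∀ p, |f p| ≤ B) (hL0 : 0 ≤ L)
    (hL : LipWithD (prodDist θ) L f) (z : Y) {φ : SigmaA N A → ℝ} (hφ : Integrable φ μ.fst)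
    (hφf : ∀ E, MeasurableSet E → ∫ x in E, φ x ∂μ.fst = ∫ p in Prod.fst ⁻¹' E, f p ∂μ) :
    ∀ᵐ x ∂μ.fst, Tendsto (fun n => (transferOp q)^[n] (fun x => f ((skew G)^[n] (x, z))) x)
      atTop (𝓝 (φ x)) := by
  set g : ℕ → SigmaA N A → ℝ := fun n =>
    (transferOp q)^[n] fun x => f ((skew G)^[n] (x, z))
  have hg : ∀ n, Integrable (g n) μ.fst := fun n =>
    .of_bound (measurable_transferOp_iterate
      (hf.comp ((hμ.measurable.iterate n).comp measurable_prodMk_right)) n).aestronglyMeasurable B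
      (.of_forall (abs_transferOp_iterate_le hq.sum_le_one (fun x => hB _) n))
  have hclose : ∀ᵐ x ∂μ.fst, ∀ n, |φ x - g n x| ≤ L * (α ^ n * Metric.diam (univ : Set Y)) :=
    ae_all_iff.mpr fun n => ae_abs_sub_le_of_forall_setIntegral hφ (hg n) fun E hE => by
      rw [hφf E hE]
      exact abs_setIntegral_sub_transferOp_iterate_le hq hμ hα0 hG1 hf hB hL0 hL n z hE
  have hrate : Tendsto (fun n => L * (α ^ n * Metric.diam (univ : Set Y))) atTop (𝓝 0) := by
    simpa using ((tendsto_pow_atTop_nhds_zero_of_lt_one hα0 hα1).mul_const _).const_mul L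
  filter_upwards [hclose] with x hx
  refine tendsto_iff_dist_tendsto_zero.mpr (squeeze_zero (fun _ => dist_nonneg) (fun n => ?_) hrate)
  rw [dist_comm]
  exact hx n

lemma exists_lipD_version_of_setIntegral_eq [BoundedSpace Y] [Nonempty Y] [IsFiniteMeasure μ]
    (hq : IsBackwardWeight μ.fst q) (hμ : MeasurePreserving (skew G) μ μ) (hθ0 : 0 ≤ θ)
    (hθ1 : θ < 1) (hα0 : 0 ≤ α) (hα1 : α < 1) (hG1 : CondG1 G α) (hG2 : CondG2 θ G H)
    (hfm : Measurable f) (hf : LipD (prodDist θ) f) {φ : SigmaA N A → ℝ}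
    (hφ : Integrable φ μ.fst)
    (hφf : ∀ E, MeasurableSet E → ∫ x in E, φ x ∂μ.fst = ∫ p in Prod.fst ⁻¹' E, f p ∂μ) :
    ∃ ψ, ψ =ᵐ[μ.fst] φ ∧ LipD (dTheta θ) ψ := by
  obtain ⟨L, hL0, hL⟩ := hf.exists_nonneg (prodDist_nonneg hθ0)
  obtain ⟨B, hB0, hB⟩ := hf.exists_abs_le (prodDist_nonneg hθ0) (prodDist_le hθ0 hθ1)
  obtain ⟨z⟩ := ‹Nonempty Y›
  set C := L * (1 + |H| / (1 - α))
  have hC0 : 0 ≤ C :=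
    mul_nonneg hL0 (add_nonneg zero_le_one (div_nonneg (abs_nonneg H) (sub_nonneg.mpr hα1.le)))
  refine exists_lipD_dTheta_ae_eq_of_tendsto hθ0 hθ1
    (by positivity : 0 ≤ C + 2 * B) (fun n => ?_)
    (ae_tendsto_transferOp_iterate_comp_skew hq hμ hα0 hα1 hG1 hfm hB hL0 hL z hφ hφf)
  exact ((lipOnBranches_comp_skew_iterate hθ0 hθ1 hα0 hα1 (abs_nonneg H) hG1 (hG2.abs hθ0) hL0 hL n
    z).map_transferOp_iterate hθ0 hC0 hq.sum_le_one hq.eq_zero).lipWithD hθ0 hθ1 hC0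
    (abs_transferOp_iterate_le hq.sum_le_one (fun x => hB _) n)

end Approximation

theorem lipschitz_subset_Theta_general (hθ0 : 0 ≤ θ) (hθ1 : θ < 1)
    {G : SigmaA N A × K → K} (hα0 : 0 ≤ α) (hα1 : α < 1) (hG1 : CondG1 G α) (hG2 : CondG2 θ G H)
    {μ₀ : Measure (SigmaA N A × K)} [IsFiniteMeasure μ₀] (hμ₀ : MeasurePreserving (skew G) μ₀ μ₀)
    (hMarkov : IsMarkov μ₀.fst) {f : SigmaA N A × K → ℝ} (hf : LipD (prodDist θ) f) :
    MemSPair μ₀.fst θ (μ₀.withDensity fun p => ENNReal.ofReal (f p))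
      (μ₀.withDensity fun p => ENNReal.ofReal (-f p)) := by
  obtain ⟨q, hq⟩ := hMarkov.exists_isBackwardWeight
  obtain ⟨B, -, hB⟩ := hf.exists_abs_le (prodDist_nonneg hθ0) (prodDist_le hθ0 hθ1)
  have hfm : Measurable f := (hf.continuous (tendsto_prodDist_self hθ0 hθ1)).measurable
  have hfi : Integrable f μ₀ := .of_bound hfm.aestronglyMeasurable B (.of_forall hB)
  have hAB := memABPair_withDensity_ofReal hfi
  obtain ⟨-, -, _, _⟩ := id hAB
  refine ⟨hAB, infNormPair_lt_top (c := B.toNNReal)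
    (fst_withDensity_le_smul fun p => ENNReal.ofReal_le_ofReal ((le_abs_self _).trans (hB p)))
    (fst_withDensity_le_smul fun p => ENNReal.ofReal_le_ofReal ((neg_le_abs _).trans (hB p))), ?_⟩
  exact exists_lipD_version_of_setIntegral_eq hq hμ₀ hθ0 hθ1 hα0 hα1 hG1 hG2 hfm hf
    integrable_phiPair fun E hE => setIntegral_phiPair_withDensity_ofReal hfi hE

end MarginalDensity

end Development

/-- Under (G1), (G2) and the spectral gap of `P_σ`, every
function `f` on `Σ_A^+ × K` which is Lipschitz with respect to `d_θ + d`
satisfies `fμ₀ ∈ S^∞`; i.e. the Lipschitz functions are contained in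
`Θ_{μ₀}`. -/
theorem lipschitz_subset_Theta
    (N : ℕ) (A : Fin N → Fin N → Bool) (hA : Aperiodic A)
    (θ : ℝ) (hθ0 : 0 < θ) (hθ1 : θ < 1)
    (m : Measure (SigmaA N A)) [IsProbabilityMeasure m]
    (hmM : IsMarkov m) (hminv : m.map shift = m)
    {K : Type*} [MetricSpace K] [CompactSpace K] [Nonempty K]
    [MeasurableSpace K] [BorelSpace K]
    (hdiam : Metric.diam (Set.univ : Set K) = 1)
    (G : SigmaA N A × K → K) (hGm : Measurable (skew G))
    (α : ℝ) (hα0 : 0 < α) (hα1 : α < 1) (hG1 : CondG1 G α)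
    (H : ℝ) (hG2 : CondG2 θ G H)
    (Pσ : (SigmaA N A → ℝ) → SigmaA N A → ℝ) (hPF : IsPerronFrobenius m Pσ)
    (D r : ℝ) (hD : 0 < D) (hr0 : 0 < r) (hr1 : r < 1)
    (hgap : HasGap m θ Pσ D r)
    (μ₀ : Measure (SigmaA N A × K)) [IsProbabilityMeasure μ₀]
    (hinv : μ₀.map (skew G) = μ₀) (hS : MemSPair m θ μ₀ 0)
    (huniq : ∀ μ' : Measure (SigmaA N A × K),
      IsProbabilityMeasure μ' → μ'.map (skew G) = μ' → MemSPair m θ μ' 0 → μ' = μ₀) :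
    ∀ f : SigmaA N A × K → ℝ,
      (∃ Lf : ℝ, ∀ p q, |f p - f q| ≤ Lf * (dTheta θ p.1 q.1 + dist p.2 q.2)) →
      MemSPair m θ (μ₀.withDensity fun p => ENNReal.ofReal (f p))
        (μ₀.withDensity fun p => ENNReal.ofReal (-f p)) := by
  intro f hf
  obtain ⟨ψ, hψ, hψL⟩ := hS.2.2
  have hfst : μ₀.fst = m :=
    hgap.eq_of_map_shift_eq hPF hθ0 hθ1 (abs_lt.mpr ⟨by linarith, hr1⟩) hminv
      (map_shift_fst_of_map_skew_eq hGm hinv) hS.1.1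
      (hψ.trans (phiPair_zero_right m μ₀)) hψL
  subst hfst
  exact lipschitz_subset_Theta_general hθ0.le hθ1 hα0.le hα1 hG1 hG2 ⟨hGm, hinv⟩ hmM hf

end RDS
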